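/- arXiv:0812.5002 — 2 statements merged into one kernel-verified Lean document; each statement's English description precedes it below -/
import Mathlib

section
/- Let L be the centerless twisted N=2 superconformal algebra, V = L ⊗ L the L-module under the adjoint diagonal action with grading V_i = Σ_{j+k=i} L_j ⊗ L_k, and let d be a homogeneous super-derivation from L to V of degree i ∈ (1/2)ℤ with i ≠ 0. Then d is inner; explicitly, d = u_inn for u = −(1/i) d(L_0) ∈ V_i, i.e., d(x) = (−1)^{[u][x]} x ∗ u for all x ∈ L. -/
namespace N2

/-- Basis indices of the centerless twisted N=2 superconformal algebra:
`L m` is the Virasoro generator `L_m` (`m ∈ ℤ`),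
`T k` is the Heisenberg generator `T_{k+1/2}` (`k ∈ ℤ`, index in `1/2 + ℤ`),
`G n` is the fermionic generator `G_{n/2}` (`n ∈ ℤ`, index in `(1/2)ℤ`). -/
inductive Idx : Type
  | L : ℤ → Idx
  | T : ℤ → Idx
  | G : ℤ → Idx
  deriving DecidableEq

noncomputable section

/-- The centerless twisted N=2 superconformal algebra `𝓛`, as the free
complex vector space on the basis `{L_m, T_r, G_p}`. -/
abbrev Lsa : Type := Idx →₀ ℂ

/-- `𝓛 ⊗ 𝓛`, realized as the free complex vector space on pairs of basis indices. -/
abbrev V : Type := (Idx × Idx) →₀ ℂ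

/-- `𝓛 ⊗ 𝓛 ⊗ 𝓛`. -/
abbrev W : Type := (Idx × Idx × Idx) →₀ ℂ

/-- the basis vector indexed by `i`. -/
def e (i : Idx) : Lsa := Finsupp.single i 1

/-- the ℤ₂-parity of the basis elements: `L_m, T_r` are even, `G_p` is odd. -/
def par : Idx → ZMod 2
  | .L _ => 0
  | .T _ => 0
  | .G _ => 1

/-- the sign `(-1)^p` for `p ∈ ℤ₂`. -/
def sgn (p : ZMod 2) : ℂ := if p = 0 then 1 else -1

/-- the `(1/2)ℤ`-degree of a basis element, as a rational number:
`L_m ↦ m`, `T_{k+1/2} ↦ k + 1/2`, `G_{n/2} ↦ n/2`. -/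
def qdeg : Idx → ℚ
  | .L m => (m : ℚ)
  | .T k => (k : ℚ) + 1/2
  | .G n => (n : ℚ) / 2

/-- The super-bracket of `𝓛` on basis elements:
`[L_m, L_n] = (m-n) L_{m+n}`, `[L_m, T_r] = -r T_{r+m}`, `[T_r, T_s] = 0`,
`[L_m, G_p] = (m/2 - p) G_{p+m}`, `[T_r, G_p] = G_{p+r}`,
`[G_p, G_q] = (-1)^{2p} 2 L_{p+q}` if `p+q ∈ ℤ` and
`[G_p, G_q] = (-1)^{2p+1} (p-q) T_{p+q}` if `p+q ∈ 1/2+ℤ`,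
together with the super skew-symmetric counterparts. -/
def bk : Idx → Idx → Lsa
  | .L m, .L n => ((m : ℂ) - n) • e (.L (m + n))
  | .L m, .T k => (-((k : ℂ) + 1/2)) • e (.T (k + m))
  | .L m, .G n => (((m : ℂ) - n) / 2) • e (.G (n + 2*m))
  | .T k, .L m => ((k : ℂ) + 1/2) • e (.T (k + m))
  | .T _, .T _ => 0
  | .T k, .G n => e (.G (n + 2*k + 1))
  | .G n, .L m => (-((m : ℂ) - n) / 2) • e (.G (n + 2*m))
  | .G n, .T k => - e (.G (n + 2*k + 1))
  | .G n, .G n' =>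
      if (n + n') % 2 = 0 then
        ((-1 : ℂ) ^ n * 2) • e (.L ((n + n') / 2))
      else
        ((-1 : ℂ) ^ (n + 1) * (((n : ℂ) - n') / 2)) • e (.T ((n + n' - 1) / 2))

/-- the bracket of `𝓛`, extended bilinearly to all of `𝓛`. -/
def br (x y : Lsa) : Lsa :=
  x.sum fun i a => y.sum fun j b => (a * b) • bk i j

/-- the adjoint diagonal action of `𝓛` on `𝓛 ⊗ 𝓛`:
`x ∗ (a ⊗ b) = [x,a] ⊗ b + (-1)^{[x][a]} a ⊗ [x,b]`. -/
def act2 (x : Lsa) (v : V) : V :=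
  x.sum fun i a => v.sum fun p c =>
    (a * c) •
      (((bk i p.1).sum fun k t => Finsupp.single (k, p.2) t)
        + sgn (par i * par p.1) • ((bk i p.2).sum fun k t => Finsupp.single (p.1, k) t))

/-- the adjoint diagonal action of `𝓛` on `𝓛 ⊗ 𝓛 ⊗ 𝓛`. -/
def act3 (x : Lsa) (w : W) : W :=
  x.sum fun i a => w.sum fun p c =>
    (a * c) •
      (((bk i p.1).sum fun k t => Finsupp.single (k, p.2.1, p.2.2) t)
        + sgn (par i * par p.1) •
            ((bk i p.2.1).sum fun k t => Finsupp.single (p.1, k, p.2.2) t)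
        + sgn (par i * (par p.1 + par p.2.1)) •
            ((bk i p.2.2).sum fun k t => Finsupp.single (p.1, p.2.1, k) t))

/-- the adjoint diagonal action of `𝓛` on the `n`-fold tensor power `𝓛^{⊗n}`,
realized as the free complex vector space on `n`-tuples of basis indices:
`x ∗ (a₁ ⊗ ⋯ ⊗ aₙ) = Σ_k (-1)^{[x]([a₁]+⋯+[a_{k-1}])} a₁ ⊗ ⋯ ⊗ [x,a_k] ⊗ ⋯ ⊗ aₙ`. -/
def actN (n : ℕ) (x : Lsa) (v : (Fin n → Idx) →₀ ℂ) : (Fin n → Idx) →₀ ℂ :=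
  x.sum fun i a => v.sum fun f c =>
    (a * c) •
      (Finset.univ.sum fun k : Fin n =>
        sgn (par i * ((Finset.univ.filter fun l => l < k).sum fun l => par (f l))) •
          ((bk i (f k)).sum fun j t => Finsupp.single (Function.update f k j) t))

/-- the super-twist map `τ : 𝓛 ⊗ 𝓛 → 𝓛 ⊗ 𝓛`, `τ(x ⊗ y) = (-1)^{[x][y]} y ⊗ x`. -/
def tau (v : V) : V :=
  v.sum fun p c => (sgn (par p.1 * par p.2) * c) • Finsupp.single (p.2, p.1) 1

/-- the image `Im(1⊗1 - τ) ⊂ 𝓛 ⊗ 𝓛`. -/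
def ImOneSubTau : Set V := Set.range fun v : V => v - tau v

/-- the super-cyclic map `ξ` on `𝓛 ⊗ 𝓛 ⊗ 𝓛`:
`ξ(x₁ ⊗ x₂ ⊗ x₃) = (-1)^{[x₁]([x₂]+[x₃])} x₂ ⊗ x₃ ⊗ x₁`. -/
def xi (w : W) : W :=
  w.sum fun p c =>
    (sgn (par p.1 * (par p.2.1 + par p.2.2)) * c) • Finsupp.single (p.2.1, p.2.2, p.1) 1

/-- `c(r) = [r¹², r¹³] + [r¹², r²³] + [r¹³, r²³] ∈ 𝓛 ⊗ 𝓛 ⊗ 𝓛` for `r ∈ 𝓛 ⊗ 𝓛`. -/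
def cYB (r : V) : W :=
  r.sum fun p a => r.sum fun q b =>
    (a * b) •
      (sgn (par q.1 * par p.2) •
          ((bk p.1 q.1).sum fun k t => Finsupp.single (k, p.2, q.2) t)
        + ((bk p.2 q.1).sum fun k t => Finsupp.single (p.1, k, q.2) t)
        + sgn (par q.1 * par p.2) •
            ((bk p.2 q.2).sum fun k t => Finsupp.single (p.1, q.1, k) t))

/-- `1 ⊗ D : 𝓛 ⊗ 𝓛 → 𝓛 ⊗ 𝓛 ⊗ 𝓛` for an even map `D : 𝓛 → 𝓛 ⊗ 𝓛`. -/
def oneTensorMap (D : Lsa → V) (v : V) : W :=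
  v.sum fun p c => c • ((D (e p.2)).sum fun q t => Finsupp.single (p.1, q.1, q.2) t)

/-- `r ∈ 𝓛 ⊗ 𝓛` is homogeneous of parity `ε ∈ ℤ₂`. -/
def IsParityV (ε : ZMod 2) (r : V) : Prop := ∀ p ∈ r.support, par p.1 + par p.2 = ε

/-- `r ∈ 𝓛 ⊗ 𝓛` is even (degree `0̄`). -/
def IsEvenV (r : V) : Prop := IsParityV 0 r

/-- `r` lies in the graded component `V_ι = Σ_{j+k=ι} 𝓛_j ⊗ 𝓛_k` of `V = 𝓛 ⊗ 𝓛`. -/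
def IsDegV (ι : ℚ) (r : V) : Prop := ∀ p ∈ r.support, qdeg p.1 + qdeg p.2 = ι

/-- the linear map `𝓛 → M` with the prescribed values on the basis. -/
def ofBasis {M : Type*} [AddCommMonoid M] [Module ℂ M] (g : Idx → M) : Lsa →ₗ[ℂ] M :=
  Finsupp.lsum ℂ fun i => LinearMap.toSpanSingleton ℂ M (g i)

/-- the inner super-derivation `a_inn` attached to `a ∈ 𝓛 ⊗ 𝓛` of parity `ε`:
`a_inn(x) = (-1)^{[a][x]} x ∗ a` for homogeneous `x`, extended linearly. -/
def innMap (ε : ZMod 2) (a : V) : Lsa →ₗ[ℂ] V :=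
  ofBasis fun i => sgn (ε * par i) • act2 (e i) a

/-- `d : 𝓛 → 𝓛 ⊗ 𝓛` is a super-derivation of parity `ε`:
`d(𝓛_ī) ⊆ V_{ī+ε}` and
`d([x,y]) = (-1)^{[d][x]} x ∗ d(y) - (-1)^{[y]([d]+[x])} y ∗ d(x)`
for homogeneous `x, y` (stated on basis elements and extended bilinearly). -/
def IsDerOfParity (ε : ZMod 2) (d : Lsa →ₗ[ℂ] V) : Prop :=
  (∀ i : Idx, IsParityV (par i + ε) (d (e i))) ∧
  (∀ i j : Idx,
    d (bk i j)
      = sgn (ε * par i) • act2 (e i) (d (e j))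
        - sgn (par j * (ε + par i)) • act2 (e j) (d (e i)))

/-- `d` is homogeneous of degree `ι ∈ (1/2)ℤ` with respect to the `(1/2)ℤ`-grading:
`d(𝓛_j) ⊆ V_{ι+j}`. -/
def IsDegHomogDer (ι : ℚ) (d : Lsa →ₗ[ℂ] V) : Prop :=
  ∀ i : Idx, IsDegV (ι + qdeg i) (d (e i))

/-- `D : 𝓛 → 𝓛 ⊗ 𝓛` defines a Lie super-bialgebra structure on `𝓛`: it is linear,
`D(𝓛_ī) ⊆ Σ_j 𝓛_j̄ ⊗ 𝓛_{ī-j̄}`, `Im D ⊆ Im(1⊗1-τ)`,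
`(1⊗1⊗1 + ξ + ξ²)(1 ⊗ D)D = 0`, and
`D([x,y]) = x ∗ D(y) - (-1)^{[x][y]} y ∗ D(x)`. -/
structure IsLieSuperBialgebraDelta (D : Lsa → V) : Prop where
  linear : IsLinearMap ℂ D
  parity : ∀ i : Idx, IsParityV (par i) (D (e i))
  skewIm : ∀ x : Lsa, D x ∈ ImOneSubTau
  coJacobi : ∀ x : Lsa,
    oneTensorMap D (D x) + xi (oneTensorMap D (D x)) + xi (xi (oneTensorMap D (D x))) = 0
  cocycle : ∀ i j : Idx,
    D (bk i j) = act2 (e i) (D (e j)) - sgn (par i * par j) • act2 (e j) (D (e i))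

theorem bk_L0 (j : Idx) : bk (.L 0) j = (-((qdeg j : ℚ) : ℂ)) • e j := by
  cases j <;> simp [bk, qdeg, neg_div]

theorem act2_e (i : Idx) (v : V) : act2 (e i) v = v.sum fun p c =>
    (1 * c) •
      (((bk i p.1).sum fun k t => Finsupp.single (k, p.2) t)
        + sgn (par i * par p.1) • ((bk i p.2).sum fun k t => Finsupp.single (p.1, k) t)) := by
  unfold act2 e
  rw [Finsupp.sum_single_index]
  simp

theorem act2_smul (i : Idx) (c : ℂ) (v : V) : act2 (e i) (c • v) = c • act2 (e i) v := by
  rw [act2_e, act2_e, Finsupp.sum_smul_index (by simp), Finsupp.smul_sum]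
  simp only [one_mul, smul_smul]

theorem act2_L0 (ι : ℚ) (v : V) (hv : IsDegV ι v) :
    act2 (e (.L 0)) v = (-(ι : ℂ)) • v := by
  rw [act2_e]
  conv_rhs => rw [← Finsupp.sum_single v, Finsupp.smul_sum]
  refine Finsupp.sum_congr fun p hp => ?_
  have h := hv p hp
  have hs : sgn (par (.L 0) * par p.1) = 1 := by simp [par, sgn]
  rw [hs, bk_L0, bk_L0, ← h]
  simp only [e, Finsupp.smul_single, smul_eq_mul, mul_one, one_mul, one_smul]
  rw [Finsupp.sum_single_index (by simp), Finsupp.sum_single_index (by simp)]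
  rw [← Finsupp.single_add, Finsupp.smul_single]
  congr 1
  push_cast
  simp only [smul_eq_mul]
  ring

/-- A homogeneous super-derivation `d : 𝓛 → V = 𝓛 ⊗ 𝓛` of degree `ι ∈ (1/2)ℤ`
with `ι ≠ 0` is inner, namely `d = u_inn` for `u = -(1/ι) d(L_0) ∈ V_ι`,
i.e. `d(x) = (-1)^{[u][x]} x ∗ u` for all `x ∈ 𝓛`. -/
theorem nonzero_degree_der_is_inner (ε : ZMod 2) (ι : ℚ) (hhalf : ∃ k : ℤ, ι = (k : ℚ) / 2)
    (hι : ι ≠ 0) (d : Lsa →ₗ[ℂ] V) (hd : IsDerOfParity ε d) (hhom : IsDegHomogDer ι d) :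
    d = innMap ε ((-(ι : ℂ)⁻¹) • d (e (Idx.L 0))) := by
  have hι' : (ι : ℂ) ≠ 0 := by exact_mod_cast hι
  refine Finsupp.lhom_ext' fun j => LinearMap.ext_ring ?_
  change d (e j) = innMap ε _ (Finsupp.single j 1)
  have hR : ∀ u, innMap ε u (Finsupp.single j 1) = sgn (ε * par j) • act2 (e j) u := by
    intro u
    simp [innMap, ofBasis]
  rw [hR, act2_smul]
  have h := hd.2 (.L 0) j
  have h1 : sgn (ε * par (.L 0)) = 1 := by simp [par, sgn]
  have h2 : par j * (ε + par (.L 0)) = ε * par j := by simp [par, mul_comm]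
  rw [bk_L0, map_smul, act2_L0 _ _ (hhom j), h1, h2, one_smul] at h
  rw [smul_comm]
  have h3 : sgn (ε * par j) • act2 (e j) (d (e (.L 0))) = (-(ι : ℂ)) • d (e j) := by
    rw [eq_sub_iff_add_eq'] at h
    rw [← eq_sub_iff_add_eq] at h
    rw [h, ← sub_smul]
    congr 1
    push_cast
    ring
  rw [h3, smul_smul, neg_mul_neg, inv_mul_cancel₀ hι', one_smul]

end
end N2
end

section
/- Let L be the centerless twisted N=2 superconformal algebra, V = L ⊗ L the L-module under the adjoint diagonal action, and let d₀ be an even (parity 0̄) homogeneous super-derivation from L to V of degree 0 with respect to the (1/2)ℤ-grading. Then d₀ is inner: there exists u ∈ V_0 such that d₀(x) = x ∗ u for all x ∈ L. -/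
namespace N2

noncomputable section

/-! ### The action as a bilinear map -/

lemma sgn_zero : sgn 0 = 1 := by simp [sgn]
lemma sgn_one : sgn 1 = -1 := by simp [sgn]
lemma zmod2_cases (a : ZMod 2) : a = 0 ∨ a = 1 := by revert a; decide
lemma sgn_add (a b : ZMod 2) : sgn (a + b) = sgn a * sgn b := by
  have h : (1 + 1 : ZMod 2) = 0 := by decide
  rcases zmod2_cases a with rfl | rfl <;> rcases zmod2_cases b with rfl | rfl <;>
    simp [sgn, h]
lemma sgn_sq (a : ZMod 2) : sgn a * sgn a = 1 := by
  rcases zmod2_cases a with rfl | rfl <;> simp [sgn]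

/-- `x ⊗ y` -/
def tens : Lsa →ₗ[ℂ] Lsa →ₗ[ℂ] V :=
  Finsupp.lsum ℂ fun k => LinearMap.toSpanSingleton ℂ (Lsa →ₗ[ℂ] V)
    (Finsupp.lmapDomain ℂ ℂ fun j => (k, j))

/-- the bracket as a bilinear map -/
def adB : Lsa →ₗ[ℂ] Lsa →ₗ[ℂ] Lsa :=
  Finsupp.lsum ℂ fun i => LinearMap.toSpanSingleton ℂ (Lsa →ₗ[ℂ] Lsa)
    (Finsupp.lsum ℂ fun j => LinearMap.toSpanSingleton ℂ Lsa (bk i j))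

/-- the action of a basis element on basis elements. -/
def adp (i : Idx) (p : Idx × Idx) : V :=
  tens (bk i p.1) (e p.2) + sgn (par i * par p.1) • tens (e p.1) (bk i p.2)

/-- the action as a bilinear map -/
def actB : Lsa →ₗ[ℂ] V →ₗ[ℂ] V :=
  Finsupp.lsum ℂ fun i => LinearMap.toSpanSingleton ℂ (V →ₗ[ℂ] V)
    (Finsupp.lsum ℂ fun p => LinearMap.toSpanSingleton ℂ V (adp i p))

lemma tens_e_left (i : Idx) (y : Lsa) :
    tens (e i) y = y.sum fun k t => Finsupp.single (i, k) t := by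
  simp [tens, e, Finsupp.mapDomain]

lemma tens_e (i j : Idx) : tens (e i) (e j) = Finsupp.single (i, j) 1 := by
  rw [tens_e_left]; simp [e]

lemma tens_e_right (j : Idx) (x : Lsa) :
    tens x (e j) = x.sum fun k t => Finsupp.single (k, j) t := by
  induction x using Finsupp.induction_linear with
  | zero => simp
  | add f g hf hg =>
    rw [map_add, LinearMap.add_apply, hf, hg, Finsupp.sum_add_index'] <;> simp
  | single i a =>
    have : (Finsupp.single i a : Lsa) = a • e i := by simp [e]
    rw [this, map_smul, LinearMap.smul_apply, tens_e]; simp [e]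

lemma adB_e (i j : Idx) : adB (e i) (e j) = bk i j := by simp [adB, e]

lemma actB_e_single (i : Idx) (p : Idx × Idx) (c : ℂ) :
    actB (e i) (Finsupp.single p c) = c • adp i p := by simp [actB, e]

lemma act2_eq (x : Lsa) (v : V) : act2 x v = actB x v := by
  simp only [act2, actB, Finsupp.lsum_apply, Finsupp.sum, LinearMap.sum_apply,
    LinearMap.toSpanSingleton_apply, LinearMap.smul_apply, Finset.smul_sum, adp, tens_e_left,
    tens_e_right, mul_smul]

lemma actB_e_apply (i : Idx) (v : V) : actB (e i) v = v.sum fun p c => c • adp i p := by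
  simp [actB, e]
  rfl

/-! ### Homogeneity of the bracket -/

lemma bk_hom (i j : Idx) : ∃ (c : ℂ) (k : Idx), bk i j = c • e k ∧ par k = par i + par j ∧
    qdeg k = qdeg i + qdeg j := by
  rcases i with m | m | m <;> rcases j with n | n | n
  · exact ⟨_, _, rfl, by simp [par], by simp [qdeg]⟩
  · exact ⟨_, _, rfl, by simp [par], by simp [qdeg]; ring⟩
  · exact ⟨_, _, rfl, by simp [par], by simp [qdeg]; ring⟩
  · exact ⟨_, _, rfl, by simp [par], by simp [qdeg]; ring⟩
  · exact ⟨0, .L (m + n + 1), by simp [bk], by simp [par], by simp [qdeg]; ring⟩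
  · exact ⟨1, _, by simp only [bk, one_smul]; rfl, by simp [par], by simp [qdeg]; ring⟩
  · exact ⟨_, _, rfl, by simp [par], by simp [qdeg]; ring⟩
  · exact ⟨-1, .G (m + 2 * n + 1), by simp [bk], by simp [par], by simp [qdeg]; ring⟩
  · by_cases h : (m + n) % 2 = 0
    · obtain ⟨t, ht⟩ : ∃ t, m + n = 2 * t := ⟨(m + n) / 2, by omega⟩
      refine ⟨_, _, by simp only [bk, if_pos h]; rfl, by simp only [par]; decide, ?_⟩
      have h2 : (m + n) / 2 = t := by omega
      have h3 : (m : ℚ) + n = 2 * t := by exact_mod_cast ht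
      simp only [qdeg, h2]; linarith
    · obtain ⟨t, ht⟩ : ∃ t, m + n = 2 * t + 1 := ⟨(m + n) / 2, by omega⟩
      refine ⟨_, _, by simp only [bk, if_neg h]; rfl, by simp only [par]; decide, ?_⟩
      have h2 : (m + n - 1) / 2 = t := by omega
      have h3 : (m : ℚ) + n = 2 * t + 1 := by exact_mod_cast ht
      simp only [qdeg, h2]; linarith

/-! ### The Jacobi identity -/

lemma bkGG_even (n n' t : ℤ) (h : n + n' = 2 * t) :
    bk (.G n) (.G n') = ((-1 : ℂ) ^ n * 2) • e (.L t) := by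
  have h1 : (n + n') % 2 = 0 := by omega
  have h2 : (n + n') / 2 = t := by omega
  simp only [bk, if_pos h1, h2]

lemma bkGG_odd (n n' t : ℤ) (h : n + n' = 2 * t + 1) :
    bk (.G n) (.G n') = ((-1 : ℂ) ^ (n + 1) * (((n : ℂ) - n') / 2)) • e (.T t) := by
  have h1 : ¬ (n + n') % 2 = 0 := by omega
  have h2 : (n + n' - 1) / 2 = t := by omega
  simp only [bk, if_neg h1, h2]

lemma neg_one_even (n : ℤ) : (-1 : ℂ) ^ (2 * n) = 1 := by
  rw [zpow_mul]; simp

lemma neg_one_odd (n : ℤ) : (-1 : ℂ) ^ (2 * n + 1) = -1 := by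
  rw [zpow_add₀ (by norm_num), neg_one_even]; simp

lemma ee (x y : ℤ) : e (.G x) = e (.G y) ↔ x = y := by
  simp [e, Finsupp.single_left_inj]

lemma par_cases (n : ℤ) : ∃ t, n = 2 * t ∨ n = 2 * t + 1 := ⟨n / 2, by omega⟩

lemma smul_e_congr {a b : ℂ} {i j : Idx} (h : a = b) (h' : i = j) : a • e i = b • e j := by
  rw [h, h']

lemma GG00 (a b : ℤ) : bk (.G (2 * a)) (.G (2 * b)) = (2 : ℂ) • e (.L (a + b)) := by
  rw [bkGG_even _ _ (a + b) (by ring), neg_one_even]; simp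
lemma GG11 (a b : ℤ) :
    bk (.G (2 * a + 1)) (.G (2 * b + 1)) = (-2 : ℂ) • e (.L (a + b + 1)) := by
  rw [bkGG_even _ _ (a + b + 1) (by ring), neg_one_odd]; simp
lemma GG01 (a b : ℤ) :
    bk (.G (2 * a)) (.G (2 * b + 1)) = ((b : ℂ) + 1 / 2 - a) • e (.T (a + b)) := by
  rw [bkGG_odd _ _ (a + b) (by ring), neg_one_odd]
  refine smul_e_congr ?_ rfl
  push_cast; ring
lemma GG10 (a b : ℤ) :
    bk (.G (2 * a + 1)) (.G (2 * b)) = ((a : ℂ) + 1 / 2 - b) • e (.T (a + b)) := by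
  rw [bkGG_odd _ _ (a + b) (by ring), show 2 * a + 1 + 1 = 2 * (a + 1) by ring, neg_one_even]
  refine smul_e_congr ?_ rfl
  push_cast; ring

lemma LG0 (m b : ℤ) : bk (.L m) (.G (2 * b)) = ((m : ℂ) / 2 - b) • e (.G (2 * (b + m))) := by
  simp only [bk]; refine smul_e_congr ?_ (by ring_nf); push_cast; ring
lemma LG1 (m b : ℤ) :
    bk (.L m) (.G (2 * b + 1)) = ((m : ℂ) / 2 - b - 1 / 2) • e (.G (2 * (b + m) + 1)) := by
  simp only [bk]; refine smul_e_congr ?_ (by ring_nf); push_cast; ring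
lemma GL0 (m b : ℤ) : bk (.G (2 * b)) (.L m) = (b - (m : ℂ) / 2) • e (.G (2 * (b + m))) := by
  simp only [bk]; refine smul_e_congr ?_ (by ring_nf); push_cast; ring
lemma GL1 (m b : ℤ) :
    bk (.G (2 * b + 1)) (.L m) = (b + 1 / 2 - (m : ℂ) / 2) • e (.G (2 * (b + m) + 1)) := by
  simp only [bk]; refine smul_e_congr ?_ (by ring_nf); push_cast; ring
lemma TG0 (k b : ℤ) : bk (.T k) (.G (2 * b)) = (1 : ℂ) • e (.G (2 * (b + k) + 1)) := by
  rw [one_smul]; simp only [bk]; ring_nf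
lemma TG1 (k b : ℤ) : bk (.T k) (.G (2 * b + 1)) = (1 : ℂ) • e (.G (2 * (b + k + 1))) := by
  rw [one_smul]; simp only [bk]; ring_nf
lemma GT0 (k b : ℤ) : bk (.G (2 * b)) (.T k) = (-1 : ℂ) • e (.G (2 * (b + k) + 1)) := by
  rw [neg_one_smul]; simp only [bk]; ring_nf
lemma GT1 (k b : ℤ) : bk (.G (2 * b + 1)) (.T k) = (-1 : ℂ) • e (.G (2 * (b + k + 1))) := by
  rw [neg_one_smul]; simp only [bk]; ring_nf
lemma LL' (m n : ℤ) : bk (.L m) (.L n) = ((m : ℂ) - n) • e (.L (m + n)) := rfl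
lemma LT' (m k : ℤ) : bk (.L m) (.T k) = (-((k : ℂ) + 1/2)) • e (.T (k + m)) := rfl
lemma TL' (m k : ℤ) : bk (.T k) (.L m) = ((k : ℂ) + 1/2) • e (.T (k + m)) := rfl
lemma TT' (m k : ℤ) : bk (.T k) (.T m) = 0 := rfl

lemma Idx_cases (i : Idx) : (∃ m, i = .L m) ∨ (∃ m, i = .T m) ∨ (∃ m, i = .G (2 * m)) ∨
    (∃ m, i = .G (2 * m + 1)) := by
  rcases i with m | m | m
  · exact Or.inl ⟨m, rfl⟩
  · exact Or.inr (Or.inl ⟨m, rfl⟩)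
  · rcases par_cases m with ⟨t, h | h⟩
    · exact Or.inr (Or.inr (Or.inl ⟨t, by rw [h]⟩))
    · exact Or.inr (Or.inr (Or.inr ⟨t, by rw [h]⟩))

lemma jac1 {a b c : ℂ} {i j k : Idx} (h1 : i = j) (h2 : i = k) (h : a = b - c) :
    a • e i = b • e j - c • e k := by
  subst h1 h2 h; rw [sub_smul]

lemma jac0 {b c : ℂ} {j k : Idx} (h1 : j = k) (h : b = c) : 0 = b • e j - c • e k := by
  subst h1 h; simp
lemma jac2 {b c : ℂ} {j k : Idx} (h1 : j = k) (h : b = -c) : b • e j = 0 - c • e k := by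
  subst h1 h; simp

set_option maxHeartbeats 4000000 in
lemma jacobi (i j p : Idx) : adB (bk i j) (e p)
    = adB (e i) (bk j p) - sgn (par i * par j) • adB (e j) (bk i p) := by
  rcases Idx_cases i with ⟨m, rfl⟩ | ⟨m, rfl⟩ | ⟨m, rfl⟩ | ⟨m, rfl⟩ <;>
  rcases Idx_cases j with ⟨n, rfl⟩ | ⟨n, rfl⟩ | ⟨n, rfl⟩ | ⟨n, rfl⟩ <;>
  rcases Idx_cases p with ⟨q, rfl⟩ | ⟨q, rfl⟩ | ⟨q, rfl⟩ | ⟨q, rfl⟩ <;>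
  simp only [GG00, GG01, GG10, GG11, LG0, LG1, GL0, GL1, TG0, TG1, GT0, GT1, LL', LT', TL', TT',
    map_smul, LinearMap.smul_apply, adB_e, smul_smul, par, mul_zero, mul_one, sgn_zero,
    sgn_one, one_smul, map_zero, smul_zero, LinearMap.zero_apply, sub_zero] <;>
  first
  | rfl
  | (refine jac1 ?_ ?_ ?_ <;> first | (congr 1; omega) | (push_cast; ring1))
  | (refine jac0 ?_ ?_ <;> first | (congr 1; omega) | (push_cast; ring1))
  | (refine jac2 ?_ ?_ <;> first | (congr 1; omega) | (push_cast; ring1))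
  | (refine smul_e_congr ?_ ?_ <;> first | (congr 1; omega) | (push_cast; ring1))
  | (symm; rw [sub_eq_zero]; congr 2; omega)

/-! ### The action is a module structure -/

lemma actB_tens_e (i p : Idx) (b : Lsa) : actB (e i) (tens (e p) b)
    = tens (bk i p) b + sgn (par i * par p) • tens (e p) (adB (e i) b) := by
  induction b using Finsupp.induction_linear with
  | zero => simp
  | add f g hf hg => simp only [map_add, hf, hg, smul_add]; abel
  | single q a =>
    have : (Finsupp.single q a : Lsa) = a • e q := by simp [e]
    rw [this]
    simp only [map_smul, adB_e]
    rw [tens_e, actB_e_single, adp, one_smul, smul_add, smul_comm]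

lemma actB_tens_bk (i j p : Idx) (b : Lsa) : actB (e i) (tens (bk j p) b)
    = tens (adB (e i) (bk j p)) b
      + sgn (par i * (par j + par p)) • tens (bk j p) (adB (e i) b) := by
  obtain ⟨c, k, h, hp, -⟩ := bk_hom j p
  rw [h, ← hp]
  simp only [map_smul, LinearMap.smul_apply, actB_tens_e, adB_e, smul_add]
  rw [smul_comm]

lemma actB_bk_tens (i j p : Idx) (b : Lsa) : actB (bk i j) (tens (e p) b)
    = tens (adB (bk i j) (e p)) b
      + sgn ((par i + par j) * par p) • tens (e p) (adB (bk i j) b) := by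
  obtain ⟨c, k, h, hp, -⟩ := bk_hom i j
  rw [h, ← hp]
  simp only [map_smul, LinearMap.smul_apply, actB_tens_e, adB_e, smul_add]
  rw [smul_comm]

lemma V_ext {f g : V →ₗ[ℂ] V} (h : ∀ p q, f (tens (e p) (e q)) = g (tens (e p) (e q))) :
    f = g := by
  apply Finsupp.lhom_ext
  rintro ⟨p, q⟩ c
  have : (Finsupp.single (p, q) c : V) = c • tens (e p) (e q) := by simp [tens_e]
  rw [this, map_smul, map_smul, h]

lemma actB_jacobi (i j : Idx) (v : V) : actB (bk i j) v
    = actB (e i) (actB (e j) v) - sgn (par j * par i) • actB (e j) (actB (e i) v) := by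
  have key : actB (bk i j) = actB (e i) ∘ₗ actB (e j)
      - sgn (par j * par i) • (actB (e j) ∘ₗ actB (e i)) := by
    apply V_ext
    intro p q
    simp only [LinearMap.sub_apply, LinearMap.smul_apply, LinearMap.comp_apply, actB_bk_tens,
      actB_tens_e, map_add, map_smul, actB_tens_bk, jacobi i j, map_sub, LinearMap.sub_apply,
      LinearMap.smul_apply, adB_e, mul_add, add_mul, sgn_add, mul_comm (par j) (par i)]
    have hs := sgn_sq (par i * par j)
    match_scalars <;> first | ring1 | linear_combination (sgn (par j * par p)) * hs
  rw [key]; rfl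

/-- inner derivations -/
def inn (u : V) : Lsa →ₗ[ℂ] V := actB.flip u

lemma inn_apply (u : V) (x : Lsa) : inn u x = actB x u := rfl

/-! ### degrees and parities -/

lemma tens_apply_ne (c c' : ℂ) (p q : Idx) (x : Idx × Idx)
    (h : (tens (c • e p) (c' • e q)) x ≠ 0) : x = (p, q) := by
  by_contra hx
  apply h
  simp only [map_smul, LinearMap.smul_apply, tens_e, Finsupp.smul_apply]
  rw [Finsupp.single_eq_of_ne hx]; simp

lemma adp_support (i : Idx) (p x : Idx × Idx) (h : adp i p x ≠ 0) :
    par x.1 + par x.2 = par i + (par p.1 + par p.2) ∧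
    qdeg x.1 + qdeg x.2 = qdeg i + (qdeg p.1 + qdeg p.2) := by
  rw [adp] at h
  obtain ⟨c, k, h1, h2, h3⟩ := bk_hom i p.1
  obtain ⟨c', k', h1', h2', h3'⟩ := bk_hom i p.2
  by_cases h4 : (tens (bk i p.1) (e p.2)) x ≠ 0
  · rw [h1, ← one_smul ℂ (e p.2)] at h4
    have := tens_apply_ne _ _ _ _ _ h4
    subst this
    simp only [h2, h3]; constructor <;> ring
  · by_cases h5 : (tens (e p.1) (bk i p.2)) x ≠ 0
    · rw [h1', ← one_smul ℂ (e p.1)] at h5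
      have := tens_apply_ne _ _ _ _ _ h5
      subst this
      simp only [h2', h3']; constructor <;> ring
    · push Not at h4 h5
      exact absurd (by simp [h4, h5]) h

lemma actB_support (i : Idx) (v : V) (x : Idx × Idx) (h : actB (e i) v x ≠ 0) :
    ∃ p ∈ v.support, par x.1 + par x.2 = par i + (par p.1 + par p.2) ∧
    qdeg x.1 + qdeg x.2 = qdeg i + (qdeg p.1 + qdeg p.2) := by
  rw [actB_e_apply, Finsupp.sum, Finsupp.finsetSum_apply] at h
  obtain ⟨p, hp, hne⟩ := Finset.exists_ne_zero_of_sum_ne_zero h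
  refine ⟨p, hp, adp_support i p x ?_⟩
  intro h0
  exact hne (by simp [h0])

/-- the derivation property in terms of `actB` -/
lemma der_iff {d : Lsa →ₗ[ℂ] V} (hd : IsDerOfParity 0 d) (i j : Idx) :
    d (bk i j) = actB (e i) (d (e j)) - sgn (par j * par i) • actB (e j) (d (e i)) := by
  have := hd.2 i j
  simpa only [act2_eq, zero_mul, sgn_zero, one_smul, zero_add] using this

lemma der_sub {d : Lsa →ₗ[ℂ] V} (hd : IsDerOfParity 0 d) (u : V) (hu : IsEvenV u) :
    IsDerOfParity 0 (d - inn u) := by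
  refine ⟨fun i x hx => ?_, fun i j => ?_⟩
  · by_cases h : x ∈ (d (e i)).support
    · exact hd.1 i x h
    · have : actB (e i) u x ≠ 0 := by
        intro h0
        simp only [Finsupp.mem_support_iff, not_not] at h
        simp [inn_apply, h0, h] at hx
      obtain ⟨p, hp, h1, -⟩ := actB_support i u x this
      rw [h1, hu p hp]
  · simp only [act2_eq, zero_mul, sgn_zero, one_smul, zero_add, LinearMap.sub_apply, inn_apply,
      der_iff hd, actB_jacobi, map_sub, smul_sub]
    abel

lemma deg_sub {d : Lsa →ₗ[ℂ] V} (hd : IsDegHomogDer 0 d) (u : V) (hu : IsDegV 0 u) :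
    IsDegHomogDer 0 (d - inn u) := by
  intro i x hx
  by_cases h : x ∈ (d (e i)).support
  · exact hd i x h
  · have : actB (e i) u x ≠ 0 := by
      intro h0
      simp only [Finsupp.mem_support_iff, not_not] at h
      simp [inn_apply, h0, h] at hx
    obtain ⟨p, hp, -, h1⟩ := actB_support i u x this
    rw [h1, hu p hp]; ring

/-! ### coefficients -/

lemma tens_apply (a b : Lsa) (x y : Idx) : tens a b (x, y) = a x * b y := by
  induction a using Finsupp.induction_linear with
  | zero => simp
  | add f g hf hg => simp [hf, hg, add_mul]
  | single i c =>
    induction b using Finsupp.induction_linear with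
    | zero => simp
    | add f g hf hg => simp only [map_add, Finsupp.add_apply, hf, hg, mul_add]
    | single j c' =>
      have h1 : (Finsupp.single i c : Lsa) = c • e i := by simp [e]
      have h2 : (Finsupp.single j c' : Lsa) = c' • e j := by simp [e]
      rw [h1, h2]
      simp only [map_smul, LinearMap.smul_apply, tens_e, Finsupp.smul_apply, smul_eq_mul]
      simp only [e, Finsupp.single_apply, Prod.mk.injEq]
      by_cases hi : i = x <;> by_cases hj : j = y <;> simp [hi, hj]; ring

lemma coef (i x y q q' : Idx) (c c' : ℂ) (h : ∀ p, bk i p x = if p = q then c else 0)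
    (h' : ∀ p, bk i p y = if p = q' then c' else 0) (v : V) :
    actB (e i) v (x, y) = c * v (q, y) + sgn (par i * par x) * (c' * v (x, q')) := by
  induction v using Finsupp.induction_linear with
  | zero => simp
  | add f g hf hg => simp only [map_add, Finsupp.add_apply, hf, hg]; ring
  | single p a =>
    obtain ⟨p, r⟩ := p
    rw [actB_e_single, adp]
    simp only [Finsupp.smul_apply, Finsupp.add_apply, tens_apply, h, h', smul_eq_mul, e,
      Finsupp.single_apply, Prod.mk.injEq]
    by_cases h1 : p = q <;> by_cases h2 : r = y <;> by_cases h3 : p = x <;>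
      by_cases h4 : r = q' <;> simp_all <;> ring

lemma e_ap (i x : Idx) : e i x = if i = x then 1 else 0 := by
  simp [e, Finsupp.single_apply]

lemma preTL (k a : ℤ) (q : Idx) (p : Idx) : bk (.T k) p (.L a) = if p = q then 0 else 0 := by
  rcases p with n | n | n <;> simp [bk, e_ap]
lemma preTT (k a : ℤ) (p : Idx) :
    bk (.T k) p (.T a) = if p = .L (a - k) then (k : ℂ) + 1 / 2 else 0 := by
  rcases p with n | n | n <;> simp [bk, e_ap, eq_sub_iff_add_eq, add_comm]
lemma preTG (k a : ℤ) (p : Idx) :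
    bk (.T k) p (.G a) = if p = .G (a - 2 * k - 1) then (1 : ℂ) else 0 := by
  rcases p with n | n | n <;> simp [bk, e_ap]
  congr 1; apply propext; omega
lemma preLL (k a : ℤ) (p : Idx) :
    bk (.L k) p (.L a) = if p = .L (a - k) then 2 * (k : ℂ) - a else 0 := by
  rcases p with n | n | n <;> simp [bk, e_ap]
  split_ifs with h1 h2 h2
  · subst h1; push_cast; ring
  · omega
  · omega
  · rfl
lemma preLT (k a : ℤ) (p : Idx) :
    bk (.L k) p (.T a) = if p = .T (a - k) then (k : ℂ) - a - 1 / 2 else 0 := by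
  rcases p with n | n | n <;> simp [bk, e_ap]
  split_ifs with h1 h2 h2
  · subst h1; push_cast; ring
  · omega
  · omega
  · rfl
lemma preLG (k a : ℤ) (p : Idx) :
    bk (.L k) p (.G a) = if p = .G (a - 2 * k) then (3 * (k : ℂ) - a) / 2 else 0 := by
  rcases p with n | n | n <;> simp [bk, e_ap]
  split_ifs with h1 h2 h2
  · subst h1; push_cast; ring
  · omega
  · omega
  · rfl
lemma preG0G_odd (k : ℤ) (p : Idx) :
    bk (.G 0) p (.G (2 * k + 1)) = if p = .T k then (-1 : ℂ) else 0 := by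
  rcases p with n | n | n
  · simp [bk, e_ap]; intro h; omega
  · simp [bk, e_ap]; split_ifs <;> first | rfl | omega | simp
  · simp only [bk]; split_ifs <;> simp_all [e_ap]
lemma preG0T (k : ℤ) (p : Idx) :
    bk (.G 0) p (.T k) = if p = .G (2 * k + 1) then (k : ℂ) + 1 / 2 else 0 := by
  rcases p with n | n | n
  · simp [bk, e_ap]
  · simp [bk, e_ap]
  · simp only [bk, zero_add]
    by_cases h : n % 2 = 0
    · rw [if_pos h, if_neg (by simp; omega)]; simp [e_ap]
    · rw [if_neg h]
      by_cases h2 : n = 2 * k + 1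
      · subst h2
        simp [e_ap]; ring
      · rw [if_neg (by simpa using h2)]
        simp [e_ap]; intro h3; omega
lemma preG0L (k : ℤ) (p : Idx) :
    bk (.G 0) p (.L k) = if p = .G (2 * k) then (2 : ℂ) else 0 := by
  rcases p with n | n | n
  · simp [bk, e_ap]
  · simp [bk, e_ap]
  · simp only [bk, zero_add]
    by_cases h : n % 2 = 0
    · rw [if_pos h]
      by_cases h2 : n = 2 * k
      · subst h2
        simp [e_ap]
      · rw [if_neg (by simpa using h2)]
        simp [e_ap]; intro h3; omega
    · rw [if_neg h, if_neg (by simp; omega)]; simp [e_ap]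

/-! ### sequences with finite support -/

lemma fin_bound (f : ℤ → ℂ) (hf : {n | f n ≠ 0}.Finite) : ∃ N : ℤ, ∀ n, N ≤ n → f n = 0 := by
  obtain ⟨M, hM⟩ := hf.bddAbove
  refine ⟨M + 1, fun n hn => ?_⟩
  by_contra h
  have := hM h
  omega

lemma fin_step (f : ℤ → ℂ) (hf : {n | f n ≠ 0}.Finite)
    (h : ∀ n, f n ≠ 0 → f (n + 1) ≠ 0) (n : ℤ) : f n = 0 := by
  by_contra hn
  obtain ⟨N, hN⟩ := fin_bound f hf
  have key : ∀ k : ℕ, f (n + k) ≠ 0 := by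
    intro k
    induction k with
    | zero => simpa using hn
    | succ k ih =>
      have := h _ ih
      push_cast
      rwa [← add_assoc]
  exact key (N - n).toNat (hN _ (by omega))

lemma half_ne (a : ℤ) : (a : ℂ) + 1 / 2 ≠ 0 := by
  intro h
  have h2 : ((2 * a + 1 : ℤ) : ℂ) = 0 := by push_cast; linear_combination 2 * h
  have h3 : (2 * a + 1 : ℤ) = 0 := by exact_mod_cast h2
  omega

lemma seq_const (D B : ℤ → ℤ → ℂ) (A : ℤ → ℂ) (hD : ∀ k, {n | D k n ≠ 0}.Finite)
    (hB : ∀ k, {n | B k n ≠ 0}.Finite)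
    (hF : ∀ k l i, D k i = D l (i + l - k) + B l (-i) - B k (k - l - i))
    (hL : ∀ k i : ℤ, ((k : ℂ) + 3 / 2) * D (k + 1) i
      = ((i : ℂ) - 2) * D k (i - 1) + ((k : ℂ) + 1 / 2 - i) * D k i + A i) (k i : ℤ) :
    D k i = D 0 i := by
  have hdd : ∀ k i, D k i - D (k + 1) i = D (k + 1) (i + 1) - D (k + 2) (i + 1) := by
    intro k i
    obtain ⟨N1, h1⟩ := fin_bound _ (hB k)
    obtain ⟨N2, h2⟩ := fin_bound _ (hB (k + 1))
    obtain ⟨N3, h3⟩ := fin_bound _ (hB (k + 2))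
    obtain ⟨t, ht1, ht2, ht3⟩ : ∃ t, N1 ≤ t ∧ N2 ≤ t ∧ N3 ≤ t :=
      ⟨max N1 (max N2 N3), by omega, by omega, by omega⟩
    have e1 := hF k (k - i - t) i
    have e2 := hF (k + 1) (k - i - t) i
    have e3 := hF (k + 1) (k - i - t) (i + 1)
    have e4 := hF (k + 2) (k - i - t) (i + 1)
    rw [show k - (k - i - t) - i = t by ring, h1 t ht1,
      show i + (k - i - t) - k = -t by ring] at e1
    rw [show k + 1 - (k - i - t) - i = t + 1 by ring, h2 (t + 1) (by omega),
      show i + (k - i - t) - (k + 1) = -t - 1 by ring] at e2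
    rw [show k + 1 - (k - i - t) - (i + 1) = t by ring, h2 t (by omega),
      show i + 1 + (k - i - t) - (k + 1) = -t by ring] at e3
    rw [show k + 2 - (k - i - t) - (i + 1) = t + 1 by ring, h3 (t + 1) (by omega),
      show i + 1 + (k - i - t) - (k + 2) = -t - 1 by ring] at e4
    linear_combination e1 - e2 - e3 + e4
  have hstep : ∀ k i, D k i - D (k + 1) i = 0 := by
    intro k
    apply fin_step (fun i => D k i - D (k + 1) i)
    · apply ((hD k).union (hD (k + 1))).subset
      intro i hi
      by_contra hc
      simp only [Set.mem_union, Set.mem_ofPred_eq, not_or, not_not] at hc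
      exact hi (by simp [hc.1, hc.2])
    · intro n hn hn1
      apply hn
      have l1 := hL k (n + 1)
      have l2 := hL (k + 1) (n + 1)
      have hh := hdd k n
      rw [add_sub_cancel_right] at l1 l2
      rw [show k + 1 + 1 = k + 2 by ring] at l2
      push_cast at l1 l2
      have h0 : (((k - n + 3 : ℤ) : ℂ) + 1 / 2) * (D k n - D (k + 1) n) = 0 := by
        push_cast
        have hn1' : D k (n + 1) - D (k + 1) (n + 1) = 0 := hn1
        linear_combination l1 - l2 + (k + 5 / 2) * hh + (k - n - 1 / 2) * hn1'
      exact (mul_eq_zero.mp h0).resolve_left (half_ne _)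
  induction k using Int.induction_on with
  | zero => rfl
  | succ m ih => rw [← ih]; linear_combination -(hstep m i)
  | pred m ih =>
    rw [← ih]; have := hstep (-m - 1) i
    rw [sub_add_cancel] at this; linear_combination this

lemma div_single (n : ℤ) : ∃ c : ℤ →₀ ℂ, ∀ x, (Finsupp.single n 1 : ℤ →₀ ℂ) x
    = c x + c (x - 1) + (Finsupp.single 0 ((-1 : ℂ) ^ n) : ℤ →₀ ℂ) x := by
  induction n using Int.induction_on with
  | zero => exact ⟨0, by simp⟩
  | succ m ih =>
    obtain ⟨c, hc⟩ := ih
    refine ⟨Finsupp.single (m : ℤ) 1 - c, fun x => ?_⟩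
    have := hc x
    have h2 : (Finsupp.single (m : ℤ) 1 : ℤ →₀ ℂ) (x - 1) = (Finsupp.single (m + 1 : ℤ) 1 : ℤ →₀ ℂ) x := by
      simp only [Finsupp.single_apply]; congr 1; apply propext; omega
    rw [zpow_add₀ (by norm_num), zpow_one, mul_neg_one, Finsupp.single_neg]
    simp only [Finsupp.sub_apply, h2, Finsupp.neg_apply]
    linear_combination -this
  | pred m ih =>
    obtain ⟨c, hc⟩ := ih
    refine ⟨Finsupp.single (-(m : ℤ) - 1) 1 - c, fun x => ?_⟩
    have := hc x
    have h2 : (Finsupp.single (-m - 1 : ℤ) 1 : ℤ →₀ ℂ) (x - 1) = (Finsupp.single (-m : ℤ) 1 : ℤ →₀ ℂ) x := by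
      simp only [Finsupp.single_apply]; congr 1; apply propext; omega
    rw [zpow_sub₀ (by norm_num), zpow_one, div_neg, div_one, Finsupp.single_neg]
    simp only [Finsupp.sub_apply, h2, Finsupp.neg_apply]
    linear_combination -this

lemma div_lemma (h : ℤ →₀ ℂ) : ∃ c : ℤ →₀ ℂ, ∀ x, h x
    = c x + c (x - 1) + (Finsupp.single 0 (h.sum fun n a => a * (-1 : ℂ) ^ n) : ℤ →₀ ℂ) x := by
  induction h using Finsupp.induction_linear with
  | zero => exact ⟨0, by simp⟩
  | add f g hf hg =>
    obtain ⟨c, hc⟩ := hf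
    obtain ⟨c', hc'⟩ := hg
    refine ⟨c + c', fun x => ?_⟩
    rw [Finsupp.sum_add_index' (by simp) (by intros; ring), Finsupp.single_add]
    simp only [Finsupp.add_apply]
    rw [hc, hc']; ring
  | single n a =>
    obtain ⟨c, hc⟩ := div_single n
    refine ⟨a • c, fun x => ?_⟩
    rw [Finsupp.sum_single_index (by simp)]
    have h1 : (Finsupp.single n a : ℤ →₀ ℂ) = a • Finsupp.single n 1 := by simp
    have h2 : (Finsupp.single 0 (a * (-1 : ℂ) ^ n) : ℤ →₀ ℂ) = a • Finsupp.single 0 ((-1 : ℂ) ^ n) := by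
      simp
    rw [h1, h2]
    simp only [Finsupp.smul_apply, hc x, smul_eq_mul]; ring

lemma fin_slice (v : V) (g : ℤ → Idx × Idx) (hg : Function.Injective g) :
    {n | v (g n) ≠ 0}.Finite := by
  have := (v.support.finite_toSet).preimage (hg.injOn (s := g ⁻¹' v.support))
  apply this.subset
  intro n hn
  simpa using hn

lemma exists_V (f : ℤ → ℂ) (hf : {n | f n ≠ 0}.Finite) (g : ℤ → Idx × Idx)
    (hg : Function.Injective g) :
    ∃ v : V, (∀ n, v (g n) = f n) ∧ ∀ p, v p ≠ 0 → ∃ n, p = g n := by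
  refine ⟨Finsupp.embDomain ⟨g, hg⟩ (Finsupp.ofSupportFinite f hf), fun n => ?_, fun p hp => ?_⟩
  · exact Finsupp.embDomain_apply_self ⟨g, hg⟩ _ n
  · by_contra hc
    apply hp
    apply Finsupp.embDomain_of_notMem_range
    rintro ⟨n, hn⟩
    exact hc ⟨n, hn.symm⟩

/-! ### the alternating functional -/

/-- values of the alternating functional on the basis -/
def chi : Idx × Idx → ℂ
  | (.G a, .G _) => (-1 : ℂ) ^ a
  | _ => 0

/-- the alternating functional -/
def phi : V →ₗ[ℂ] ℂ := Finsupp.lsum ℂ fun p => LinearMap.toSpanSingleton ℂ ℂ (chi p)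

lemma phi_apply (v : V) : phi v = v.sum fun p c => c * chi p := by
  simp [phi, Finsupp.sum]

lemma phi_tens (p q : Idx) : phi (tens (e p) (e q)) = chi (p, q) := by
  rw [tens_e, phi_apply]; simp

lemma phi_T (k : ℤ) (v : V) : phi (actB (e (.T k)) v) = 0 := by
  rw [actB_e_apply, map_finsuppSum]
  apply Finset.sum_eq_zero
  rintro ⟨p, q⟩ -
  show phi (v (p, q) • adp (.T k) (p, q)) = 0
  rw [map_smul, adp]
  rcases p with a | a | a <;> rcases q with b | b | b <;>
    simp [bk, phi_tens, chi, par, sgn_zero]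
  right
  rw [show a + 2 * k + 1 = a + (2 * k + 1) by ring, zpow_add₀ (by norm_num), neg_one_odd]; ring

lemma phi_L (m : ℤ) (s : ℚ) (v : V) (hv : IsDegV s v) :
    phi (actB (e (.L m)) v) = ((m : ℂ) - s) * phi v := by
  rw [actB_e_apply, map_finsuppSum, phi_apply, Finsupp.sum, Finsupp.sum, Finset.mul_sum]
  apply Finset.sum_congr rfl
  rintro ⟨p, q⟩ hp
  have h := hv _ hp
  rw [map_smul, adp, ← h]
  rcases p with a | a | a <;> rcases q with b | b | b <;>
    simp [bk, phi_tens, chi, par, sgn_zero]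
  rw [zpow_add₀ (by norm_num), neg_one_even]
  simp [qdeg]; ring

/-! ### Step 1: making `d` vanish on the `T`'s -/

lemma zero_T (k : ℤ) (w : V) (hp : IsParityV 0 w) (hd : IsDegV (k + 1 / 2) w)
    (h1 : ∀ i, w (.L i, .T (k - i)) = 0) (h2 : ∀ i, w (.T (k - i), .L i) = 0)
    (h3 : ∀ n, w (.G n, .G (2 * k + 1 - n)) = 0) : w = 0 := by
  ext x
  by_contra hx
  have hx' : w x ≠ 0 := hx
  have hxs : x ∈ w.support := by simpa using hx'
  have p1 := hp x hxs
  have d1 := hd x hxs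
  obtain ⟨x, y⟩ := x
  rcases x with a | a | a <;> rcases y with b | b | b <;> simp only [par, qdeg] at p1 d1
  · have h : ((2 * a + 2 * b : ℤ) : ℚ) = (2 * k + 1 : ℤ) := by push_cast; linarith
    have h := Int.cast_injective h
    omega
  · have h : (b : ℚ) = (k - a : ℤ) := by push_cast; linarith
    rw [Int.cast_injective h] at hx'; exact hx' (h1 a)
  · simp at p1
  · have h : (a : ℚ) = (k - b : ℤ) := by push_cast; linarith
    rw [Int.cast_injective h] at hx'; exact hx' (h2 b)
  · have h : ((2 * a + 2 * b + 2 : ℤ) : ℚ) = (2 * k + 1 : ℤ) := by push_cast; linarith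
    have h := Int.cast_injective h
    omega
  · simp at p1
  · simp at p1
  · simp at p1
  · have h : (b : ℚ) = (2 * k + 1 - a : ℤ) := by push_cast; linarith
    rw [Int.cast_injective h] at hx'; exact hx' (h3 a)

lemma der_TT {d : Lsa →ₗ[ℂ] V} (hd : IsDerOfParity 0 d) (k l : ℤ) :
    actB (e (.T k)) (d (e (.T l))) = actB (e (.T l)) (d (e (.T k))) := by
  have := der_iff hd (.T k) (.T l)
  simp only [bk, map_zero, par, mul_zero, sgn_zero, one_smul] at this
  exact (sub_eq_zero.mp this.symm)

lemma der_LT {d : Lsa →ₗ[ℂ] V} (hd : IsDerOfParity 0 d) (m k : ℤ) :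
    -((k : ℂ) + 1 / 2) • d (e (.T (k + m)))
      = actB (e (.L m)) (d (e (.T k))) - actB (e (.T k)) (d (e (.L m))) := by
  have := der_iff hd (.L m) (.T k)
  simpa only [bk, map_smul, par, mul_zero, sgn_zero, one_smul] using this

lemma T_LT {d : Lsa →ₗ[ℂ] V} (hd : IsDerOfParity 0 d) :
    ∃ a : ℤ → ℂ, {n | a n ≠ 0}.Finite ∧
      (∀ k i : ℤ, d (e (.T k)) (.L i, .T (k - i)) = ((k : ℂ) + 1 / 2) * a i) ∧
      (∀ k i : ℤ, d (e (.T k)) (.T (k - i), .L i) = ((k : ℂ) + 1 / 2) * a (-i)) := by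
  obtain ⟨D, hDdef⟩ : ∃ D : ℤ → ℤ → ℂ, ∀ k i : ℤ,
      d (e (.T k)) (.L i, .T (k - i)) = ((k : ℂ) + 1 / 2) * D k i :=
    ⟨fun k i => d (e (.T k)) (.L i, .T (k - i)) / ((k : ℂ) + 1 / 2), fun k i =>
      (mul_div_cancel₀ _ (half_ne k)).symm⟩
  obtain ⟨B, hBdef⟩ : ∃ B : ℤ → ℤ → ℂ, ∀ k i : ℤ,
      d (e (.T k)) (.T (k - i), .L i) = ((k : ℂ) + 1 / 2) * B k i :=
    ⟨fun k i => d (e (.T k)) (.T (k - i), .L i) / ((k : ℂ) + 1 / 2), fun k i =>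
      (mul_div_cancel₀ _ (half_ne k)).symm⟩
  have hD : ∀ k, {n | D k n ≠ 0}.Finite := by
    intro k
    apply (fin_slice (d (e (.T k))) (fun i => (.L i, .T (k - i)))
      (fun x y h => by simpa using (Prod.mk.inj h).1)).subset
    intro n hn
    have : d (e (.T k)) (.L n, .T (k - n)) ≠ 0 := by
      rw [hDdef]; exact mul_ne_zero (half_ne k) hn
    exact this
  have hB : ∀ k, {n | B k n ≠ 0}.Finite := by
    intro k
    apply (fin_slice (d (e (.T k))) (fun i => (.T (k - i), .L i))
      (fun x y h => by simpa using (Prod.mk.inj h).2)).subset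
    intro n hn
    have : d (e (.T k)) (.T (k - n), .L n) ≠ 0 := by
      rw [hBdef]; exact mul_ne_zero (half_ne k) hn
    exact this
  have hbase : ∀ k l a, D l (a - k) + B l (l - a) = D k (a - l) + B k (k - a) := by
    intro k l a
    have h := DFunLike.congr_fun (der_TT hd k l) (.T a, .T (k + l - a))
    rw [coef _ _ _ _ _ _ _ (preTT k a) (preTT k (k + l - a)),
      coef _ _ _ _ _ _ _ (preTT l a) (preTT l (k + l - a))] at h
    simp only [par, mul_zero, sgn_zero, one_mul] at h
    have e1 := hDdef l (a - k)
    have e2 := hBdef l (l - a)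
    have e3 := hDdef k (a - l)
    have e4 := hBdef k (k - a)
    rw [show l - (a - k) = k + l - a by ring] at e1
    rw [show l - (l - a) = a by ring] at e2
    rw [show k - (a - l) = k + l - a by ring] at e3
    rw [show k - (k - a) = a by ring] at e4
    rw [show k + l - a - k = l - a by ring, show k + l - a - l = k - a by ring, e1, e2, e3, e4] at h
    apply mul_left_cancel₀ (mul_ne_zero (half_ne k) (half_ne l))
    linear_combination h
  have hF : ∀ k l i, D k i = D l (i + l - k) + B l (-i) - B k (k - l - i) := by
    intro k l i
    have h := hbase k l (i + l)
    rw [show l - (i + l) = -i by ring, show i + l - l = i by ring,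
      show k - (i + l) = k - l - i by ring] at h
    linear_combination -h
  have hF' : ∀ k l i, B k i = B l (i + l - k) + D l (-i) - D k (k - l - i) := by
    intro k l i
    have h := hbase k l (k - i)
    rw [show l - (k - i) = i + l - k by ring, show k - i - k = -i by ring,
      show k - (k - i) = i by ring, show k - i - l = k - l - i by ring] at h
    linear_combination -h
  have hL : ∀ k i : ℤ, ((k : ℂ) + 3 / 2) * D (k + 1) i
      = ((i : ℂ) - 2) * D k (i - 1) + ((k : ℂ) + 1 / 2 - i) * D k i
        + d (e (.L 1)) (.L i, .L (1 - i)) := by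
    intro k i
    have h := DFunLike.congr_fun (der_LT hd 1 k) (.L i, .T (k + 1 - i))
    rw [Finsupp.sub_apply, Finsupp.smul_apply, coef _ _ _ _ _ _ _ (preLL 1 i) (preLT 1 (k + 1 - i)),
      coef _ _ _ _ _ _ _ (preTL k i (.L 0)) (preTT k (k + 1 - i))] at h
    simp only [par, mul_zero, sgn_zero, one_mul, smul_eq_mul] at h
    have e1 := hDdef (k + 1) i
    have e2 := hDdef k (i - 1)
    have e3 := hDdef k i
    rw [show k - (i - 1) = k + 1 - i by ring] at e2
    rw [show k + 1 - i - 1 = k - i by ring, show k + 1 - i - k = 1 - i by ring, e1, e2, e3] at h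
    push_cast at h
    apply mul_left_cancel₀ (half_ne k)
    linear_combination -h
  have hL' : ∀ k i : ℤ, ((k : ℂ) + 3 / 2) * B (k + 1) i
      = ((i : ℂ) - 2) * B k (i - 1) + ((k : ℂ) + 1 / 2 - i) * B k i
        + d (e (.L 1)) (.L (1 - i), .L i) := by
    intro k i
    have h := DFunLike.congr_fun (der_LT hd 1 k) (.T (k + 1 - i), .L i)
    rw [Finsupp.sub_apply, Finsupp.smul_apply, coef _ _ _ _ _ _ _ (preLT 1 (k + 1 - i)) (preLL 1 i),
      coef _ _ _ _ _ _ _ (preTT k (k + 1 - i)) (preTL k i (.L 0))] at h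
    simp only [par, mul_zero, sgn_zero, one_mul, smul_eq_mul] at h
    have e1 := hBdef (k + 1) i
    have e2 := hBdef k (i - 1)
    have e3 := hBdef k i
    rw [show k - (i - 1) = k + 1 - i by ring] at e2
    rw [show k + 1 - i - 1 = k - i by ring, show k + 1 - i - k = 1 - i by ring, e1, e2, e3] at h
    push_cast at h
    apply mul_left_cancel₀ (half_ne k)
    linear_combination -h
  have cD := seq_const D B _ hD hB hF hL
  have cB := seq_const B D _ hB hD hF' hL'
  have hDB : ∀ i, B 0 i = D 0 (-i) := by
    intro i
    have h := fin_step (fun i => B 0 i - D 0 (-i)) ?_ ?_ i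
    · exact sub_eq_zero.mp h
    · apply ((hB 0).union ((hD 0).preimage (neg_injective.injOn))).subset
      intro i hi
      by_contra hc
      simp only [Set.mem_union, Set.mem_ofPred_eq, Set.mem_preimage, not_or, not_not] at hc
      exact hi (by simp [hc.1, hc.2])
    · intro n hn hn1
      apply hn
      have hn1' : B 0 (n + 1) - D 0 (-(n + 1)) = 0 := hn1
      have h := hF' 0 1 n
      rw [cB 1, cD 1, show n + 1 - 0 = n + 1 by ring, show 0 - 1 - n = -(n + 1) by ring] at h
      linear_combination h + hn1'
  refine ⟨D 0, hD 0, fun k i => ?_, fun k i => ?_⟩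
  · rw [hDdef, cD]
  · rw [hBdef, cB, hDB]

lemma phi_slice (v : V) (hv : IsDegV (1 / 2) v) (h : ℤ →₀ ℂ)
    (hh : ∀ n, h n = v (.G n, .G (1 - n))) : phi v = h.sum fun n a => a * (-1 : ℂ) ^ n := by
  rw [phi_apply]
  symm
  apply Finset.sum_of_injOn (fun n : ℤ => ((.G n, .G (1 - n)) : Idx × Idx))
  · intro x _ y _ hxy
    simpa using (Prod.mk.inj hxy).1
  · intro n hn
    simp only [Finset.mem_coe, Finsupp.mem_support_iff, hh] at hn ⊢
    exact hn
  · rintro ⟨x, y⟩ hx hn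
    have hx1 := hv _ hx
    rcases x with a | a | a <;> rcases y with b | b | b <;> simp only [chi, mul_zero]
    exfalso
    apply hn
    simp only [qdeg] at hx1
    have hb : (b : ℚ) = (1 - a : ℤ) := by push_cast; linarith
    have hb := Int.cast_injective hb
    subst hb
    refine ⟨a, ?_, rfl⟩
    simp only [Finset.mem_coe, Finsupp.mem_support_iff, hh] at hx ⊢
    exact hx
  · intro n _
    simp [chi, hh]

lemma T_GG {d : Lsa →ₗ[ℂ] V} (hd : IsDerOfParity 0 d) (hdeg : IsDegHomogDer 0 d) :
    ∃ c : ℤ →₀ ℂ, ∀ k n : ℤ,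
      d (e (.T k)) (.G n, .G (2 * k + 1 - n)) = c n + c (n - 2 * k - 1) := by
  have hdT : ∀ k : ℤ, IsDegV (k + 1 / 2) (d (e (.T k))) := by
    intro k
    have := hdeg (.T k)
    rwa [zero_add] at this
  have hphi : ∀ m k : ℤ, -((k : ℂ) + 1 / 2) * phi (d (e (.T (k + m))))
      = ((m : ℂ) - (k + 1 / 2)) * phi (d (e (.T k))) := by
    intro m k
    have h := congrArg phi (der_LT hd m k)
    rw [map_smul, map_sub, phi_T, phi_L m _ _ (hdT k), sub_zero, smul_eq_mul] at h
    push_cast at h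
    exact h
  have hf0 : phi (d (e (.T 0))) = 0 := by
    have h1 := hphi 1 0
    have h2 := hphi (-1) 1
    simp only [zero_add, add_neg_cancel] at h1 h2
    push_cast at h1 h2
    linear_combination -(5 / 4 : ℂ) * h1 - (1 / 4 : ℂ) * h2
  have hfin : ∀ k, {n | d (e (.T k)) (.G n, .G (2 * k + 1 - n)) ≠ 0}.Finite := fun k =>
    fin_slice (d (e (.T k))) (fun n => (.G n, .G (2 * k + 1 - n)))
      (fun x y h => by simpa using (Prod.mk.inj h).1)
  have hfin0 := hfin 0
  simp only [mul_zero, zero_add] at hfin0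
  obtain ⟨c, hc⟩ := div_lemma (Finsupp.ofSupportFinite _ hfin0)
  rw [← phi_slice (d (e (.T 0))) (by simpa using hdT 0) _ (fun n => rfl), hf0] at hc
  have hc' : ∀ n, d (e (.T 0)) (.G n, .G (1 - n)) = c n + c (n - 1) := by
    intro n
    have := hc n
    rw [Finsupp.single_zero, Finsupp.zero_apply, add_zero] at this
    exact this
  refine ⟨c, fun k n => ?_⟩
  have h := fin_step (fun n => d (e (.T k)) (.G n, .G (2 * k + 1 - n))
    - c n - c (n - 2 * k - 1)) ?_ ?_ n
  · linear_combination h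
  · apply (((hfin k).union c.hasFiniteSupport).union
      (c.hasFiniteSupport.preimage (f := fun n => n - 2 * k - 1) (Function.Injective.injOn
        (fun x y h => by simpa using h)))).subset
    intro i hi
    by_contra hc
    simp only [Set.mem_union, Set.mem_ofPred_eq, Set.mem_preimage, not_or, not_not,
      Function.mem_support] at hc
    exact hi (by simp [hc.1.1, hc.1.2, hc.2])
  · intro n hn hn1
    apply hn
    have h := DFunLike.congr_fun (der_TT hd k 0) (.G (n + 1), .G (2 * k + 1 - n))
    rw [coef _ _ _ _ _ _ _ (preTG k (n + 1)) (preTG k (2 * k + 1 - n)),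
      coef _ _ _ _ _ _ _ (preTG 0 (n + 1)) (preTG 0 (2 * k + 1 - n))] at h
    simp only [par, zero_mul, sgn_zero, one_mul] at h
    have e1 := hc' (n + 1 - 2 * k - 1)
    have e2 := hc' (n + 1)
    rw [show 1 - (n + 1 - 2 * k - 1) = 2 * k + 1 - n by ring] at e1
    rw [show 1 - (n + 1) = 2 * k + 1 - n - 2 * k - 1 by ring] at e2
    rw [e1, e2, show n + 1 - 2 * 0 - 1 = n by ring,
      show 2 * k + 1 - n - 2 * 0 - 1 = 2 * k + 1 - (n + 1) by ring] at h
    rw [show n + 1 - 2 * k - 1 = n - 2 * k by ring, show n + 1 - 1 = n by ring] at h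
    rw [show n + 1 - 2 * k - 1 = n - 2 * k by ring] at hn1
    linear_combination -h - hn1

lemma step1 {d : Lsa →ₗ[ℂ] V} (hd : IsDerOfParity 0 d) (hdeg : IsDegHomogDer 0 d) :
    ∃ u : V, IsEvenV u ∧ IsDegV 0 u ∧ ∀ k, (d - inn u) (e (.T k)) = 0 := by
  obtain ⟨a, ha, ha1, ha2⟩ := T_LT hd
  obtain ⟨c, hc⟩ := T_GG hd hdeg
  obtain ⟨u1, h1, h1'⟩ := exists_V a ha (fun i => (.L i, .L (-i)))
    (fun x y h => by simpa using (Prod.mk.inj h).1)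
  obtain ⟨u2, h2, h2'⟩ := exists_V c c.hasFiniteSupport (fun i => (.G i, .G (-i)))
    (fun x y h => by simpa using (Prod.mk.inj h).1)
  have hsup : ∀ p ∈ (u1 + u2).support, (∃ i, p = (.L i, .L (-i))) ∨ ∃ i, p = (.G i, .G (-i)) := by
    intro p hp
    by_cases hp1 : u1 p = 0
    · right
      apply h2'
      intro hp2
      simp [hp1, hp2] at hp
    · left; exact h1' p hp1
  have hev : IsEvenV (u1 + u2) := by
    intro p hp
    rcases hsup p hp with ⟨i, rfl⟩ | ⟨i, rfl⟩ <;> simp only [par] <;> decide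
  have hdg : IsDegV 0 (u1 + u2) := by
    intro p hp
    rcases hsup p hp with ⟨i, rfl⟩ | ⟨i, rfl⟩ <;> simp only [qdeg] <;> push_cast <;> ring
  refine ⟨u1 + u2, hev, hdg, fun k => ?_⟩
  have hd' := der_sub hd _ hev
  have hdeg' := deg_sub hdeg _ hdg
  have z1 : ∀ i j, u2 (.L i, .L j) = 0 := by
    intro i j
    by_contra h
    obtain ⟨n, hn⟩ := h2' _ h
    simp at hn
  have z2 : ∀ i j, u1 (.G i, .G j) = 0 := by
    intro i j
    by_contra h
    obtain ⟨n, hn⟩ := h1' _ h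
    simp at hn
  apply zero_T k
  · have := hd'.1 (.T k); rwa [add_zero] at this
  · have := hdeg' (.T k); rwa [zero_add] at this
  · intro i
    rw [LinearMap.sub_apply, Finsupp.sub_apply, inn_apply,
      coef _ _ _ _ _ _ _ (preTL k i (.L 0)) (preTT k (k - i)), ha1]
    simp only [par, zero_mul, sgn_zero, one_mul, Finsupp.add_apply, z1]
    rw [show k - i - k = -i by ring, h1 i]; ring
  · intro i
    rw [LinearMap.sub_apply, Finsupp.sub_apply, inn_apply,
      coef _ _ _ _ _ _ _ (preTT k (k - i)) (preTL k i (.L 0)), ha2]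
    have := h1 (-i)
    simp only [neg_neg] at this
    simp only [par, zero_mul, sgn_zero, one_mul, Finsupp.add_apply, z1]
    rw [show k - i - k = -i by ring, this]; ring
  · intro n
    rw [LinearMap.sub_apply, Finsupp.sub_apply, inn_apply,
      coef _ _ _ _ _ _ _ (preTG k n) (preTG k (2 * k + 1 - n)), hc]
    have e1 := h2 (n - 2 * k - 1)
    simp only [par, zero_mul, sgn_zero, one_mul, Finsupp.add_apply, z2]
    rw [show -(n - 2 * k - 1) = 2 * k + 1 - n by ring] at e1
    rw [show 2 * k + 1 - n - 2 * k - 1 = -n by ring, h2 n, e1]; ring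

/-! ### Step 2: making `d` vanish on `G_0` -/

lemma der_TG {d : Lsa →ₗ[ℂ] V} (hd : IsDerOfParity 0 d) (hT : ∀ k, d (e (.T k)) = 0) (k n : ℤ) :
    d (e (.G (n + 2 * k + 1))) = actB (e (.T k)) (d (e (.G n))) := by
  have := der_iff hd (.T k) (.G n)
  simpa only [bk, hT, map_zero, smul_zero, sub_zero] using this

lemma TT_shift {d : Lsa →ₗ[ℂ] V} (hd : IsDerOfParity 0 d) (hT : ∀ k, d (e (.T k)) = 0) (N : ℤ) :
    actB (e (.T 0)) (actB (e (.T 0)) (d (e (.G 0))))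
      = actB (e (.T N)) (actB (e (.T (-N))) (d (e (.G 0)))) := by
  rw [← der_TG hd hT, ← der_TG hd hT, ← der_TG hd hT, ← der_TG hd hT]
  congr 3
  ring

lemma P_LG {d : Lsa →ₗ[ℂ] V} (hd : IsDerOfParity 0 d) (hT : ∀ k, d (e (.T k)) = 0) (j b : ℤ) :
    d (e (.G 0)) (.L j, .G b) = 0 := by
  obtain ⟨N1, h1⟩ := fin_bound _ (fin_slice (d (e (.G 0)))
    (fun N => (.L (j - N), .G (b + 1 + 2 * N - 1)))
    (fun x y h => by simpa using (Prod.mk.inj h).1))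
  obtain ⟨N2, h2⟩ := fin_bound _ (fin_slice (d (e (.G 0)))
    (fun N => (.L (j + N), .G (b + 1 - 2 * N - 1)))
    (fun x y h => by simpa using (Prod.mk.inj h).1))
  obtain ⟨N, hN1, hN2⟩ : ∃ N, N1 ≤ N ∧ N2 ≤ N := ⟨max N1 N2, by omega, by omega⟩
  have h := DFunLike.congr_fun (TT_shift hd hT N) (.T j, .G (b + 1))
  have key : ∀ k l b : ℤ, actB (e (.T k)) (actB (e (.T l)) (d (e (.G 0)))) (.T j, .G b)
      = (k + 1 / 2) * d (e (.G 0)) (.L (j - k), .G (b - 2 * l - 1))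
        + ((l + 1 / 2) * d (e (.G 0)) (.L (j - l), .G (b - 2 * k - 1))
          + d (e (.G 0)) (.T j, .G (b - 2 * k - 1 - 2 * l - 1))) := by
    intro k l b
    rw [coef _ _ _ _ _ _ _ (preTT k j) (preTG k b),
      coef _ _ _ _ _ _ _ (preTL l (j - k) (.L 0)) (preTG l b),
      coef _ _ _ _ _ _ _ (preTT l j) (preTG l (b - 2 * k - 1))]
    simp only [par, zero_mul, sgn_zero, one_mul, zero_add]
  rw [key, key] at h
  have h1' := h1 N hN1
  have h2' := h2 N hN2
  rw [show b + 1 - 2 * -N - 1 = b + 1 + 2 * N - 1 by ring, h1', sub_neg_eq_add, h2',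
    show b + 1 - 2 * N - 1 - 2 * -N - 1 = b - 1 by ring,
    show b + 1 - 2 * 0 - 1 - 2 * 0 - 1 = b - 1 by ring,
    show b + 1 - 2 * 0 - 1 = b by ring, sub_zero] at h
  push_cast at h
  linear_combination h

lemma P_GL {d : Lsa →ₗ[ℂ] V} (hd : IsDerOfParity 0 d) (hT : ∀ k, d (e (.T k)) = 0) (j b : ℤ) :
    d (e (.G 0)) (.G b, .L j) = 0 := by
  obtain ⟨N1, h1⟩ := fin_bound _ (fin_slice (d (e (.G 0)))
    (fun N => (.G (b + 1 + 2 * N - 1), .L (j - N)))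
    (fun x y h => by simpa using (Prod.mk.inj h).2))
  obtain ⟨N2, h2⟩ := fin_bound _ (fin_slice (d (e (.G 0)))
    (fun N => (.G (b + 1 - 2 * N - 1), .L (j + N)))
    (fun x y h => by simpa using (Prod.mk.inj h).2))
  obtain ⟨N, hN1, hN2⟩ : ∃ N, N1 ≤ N ∧ N2 ≤ N := ⟨max N1 N2, by omega, by omega⟩
  have h := DFunLike.congr_fun (TT_shift hd hT N) (.G (b + 1), .T j)
  have key : ∀ k l b : ℤ, actB (e (.T k)) (actB (e (.T l)) (d (e (.G 0)))) (.G b, .T j)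
      = (k + 1 / 2) * d (e (.G 0)) (.G (b - 2 * l - 1), .L (j - k))
        + ((l + 1 / 2) * d (e (.G 0)) (.G (b - 2 * k - 1), .L (j - l))
          + d (e (.G 0)) (.G (b - 2 * k - 1 - 2 * l - 1), .T j)) := by
    intro k l b
    rw [coef _ _ _ _ _ _ _ (preTG k b) (preTT k j),
      coef _ _ _ _ _ _ _ (preTG l b) (preTL l (j - k) (.L 0)),
      coef _ _ _ _ _ _ _ (preTG l (b - 2 * k - 1)) (preTT l j)]
    simp only [par, zero_mul, sgn_zero, one_mul, zero_add]
    ring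
  rw [key, key] at h
  have h1' := h1 N hN1
  have h2' := h2 N hN2
  rw [show b + 1 - 2 * -N - 1 = b + 1 + 2 * N - 1 by ring, h1', sub_neg_eq_add, h2',
    show b + 1 - 2 * N - 1 - 2 * -N - 1 = b - 1 by ring,
    show b + 1 - 2 * 0 - 1 - 2 * 0 - 1 = b - 1 by ring,
    show b + 1 - 2 * 0 - 1 = b by ring, sub_zero] at h
  push_cast at h
  linear_combination h

lemma L0_GG {d : Lsa →ₗ[ℂ] V} (hd : IsDerOfParity 0 d) (hT : ∀ k, d (e (.T k)) = 0) (n : ℤ) :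
    d (e (.L 0)) (.G n, .G (-n)) = 0 := by
  apply fin_step (fun n => d (e (.L 0)) (.G n, .G (-n)))
  · exact fin_slice (d (e (.L 0))) (fun n => (.G n, .G (-n)))
      (fun x y h => by simpa using (Prod.mk.inj h).1)
  · intro n hn hn1
    apply hn
    have h := DFunLike.congr_fun (der_LT hd 0 0) (.G (n + 1), .G (-n))
    rw [hT, hT, map_zero, smul_zero, zero_sub, Finsupp.neg_apply,
      coef _ _ _ _ _ _ _ (preTG 0 (n + 1)) (preTG 0 (-n)),
      show n + 1 - 2 * 0 - 1 = n by ring, show -n - 2 * 0 - 1 = -(n + 1) by ring, hn1] at h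
    simpa using h

lemma G0_sym {d : Lsa →ₗ[ℂ] V} (hd : IsDerOfParity 0 d) (hT : ∀ k, d (e (.T k)) = 0) (j : ℤ) :
    d (e (.G 0)) (.T j, .G (2 * (-j - 1) + 1)) = d (e (.G 0)) (.G (2 * j + 1), .T (-j - 1)) := by
  have h := DFunLike.congr_fun (der_iff hd (.G 0) (.G 0)) (.G (2 * j + 1), .G (2 * (-j - 1) + 1))
  have hb : bk (.G 0) (.G 0) = (2 : ℂ) • e (.L 0) := by simp [bk]
  have h0 := L0_GG hd hT (2 * j + 1)
  rw [show -(2 * j + 1) = 2 * (-j - 1) + 1 by ring] at h0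
  rw [hb, map_smul, Finsupp.smul_apply, h0, Finsupp.sub_apply, Finsupp.smul_apply,
    coef _ _ _ _ _ _ _ (preG0G_odd j) (preG0G_odd (-j - 1))] at h
  simp only [par, mul_one, sgn_one, smul_eq_mul] at h
  linear_combination h / 2

lemma zero_G (w : V) (hp : IsParityV 1 w) (hd : IsDegV 0 w)
    (h1 : ∀ i b, w (.L i, .G b) = 0) (h2 : ∀ i b, w (.G b, .L i) = 0)
    (h3 : ∀ j, w (.T j, .G (2 * (-j - 1) + 1)) = 0)
    (h4 : ∀ j, w (.G (2 * j + 1), .T (-j - 1)) = 0) : w = 0 := by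
  ext x
  by_contra hx
  have hx' : w x ≠ 0 := hx
  have hxs : x ∈ w.support := by simpa using hx'
  have p1 := hp x hxs
  have d1 := hd x hxs
  have h11 : (1 : ZMod 2) + 1 ≠ 1 := by decide
  have h00 : (0 : ZMod 2) + 0 ≠ 1 := by decide
  obtain ⟨x, y⟩ := x
  rcases x with a | a | a <;> rcases y with b | b | b <;> simp only [par, qdeg] at p1 d1
  · exact h00 p1
  · exact h00 p1
  · exact hx' (h1 a b)
  · exact h00 p1
  · exact h00 p1
  · have h : (b : ℚ) = (2 * (-a - 1) + 1 : ℤ) := by push_cast; linarith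
    rw [Int.cast_injective h] at hx'; exact hx' (h3 a)
  · exact hx' (h2 b a)
  · have h : (a : ℚ) = (2 * (-b - 1) + 1 : ℤ) := by push_cast; linarith
    have h4' := h4 (-b - 1)
    rw [show -(-b - 1) - 1 = b by ring] at h4'
    rw [Int.cast_injective h] at hx'; exact hx' h4'
  · exact h11 p1

lemma step2 {d : Lsa →ₗ[ℂ] V} (hd : IsDerOfParity 0 d) (hdeg : IsDegHomogDer 0 d)
    (hT : ∀ k, d (e (.T k)) = 0) :
    ∃ u : V, IsEvenV u ∧ IsDegV 0 u ∧ (∀ k, (d - inn u) (e (.T k)) = 0) ∧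
      (d - inn u) (e (.G 0)) = 0 := by
  have hfin : {j | -d (e (.G 0)) (.T j, .G (2 * (-j - 1) + 1)) ≠ 0}.Finite := by
    simp only [neg_ne_zero]
    exact fin_slice (d (e (.G 0))) (fun j => (.T j, .G (2 * (-j - 1) + 1)))
      (fun x y h => by simpa using (Prod.mk.inj h).1)
  obtain ⟨u, h1, h1'⟩ := exists_V _ hfin (fun j => (.T j, .T (-j - 1)))
    (fun x y h => by simpa using (Prod.mk.inj h).1)
  have hsup : ∀ p ∈ u.support, ∃ j, p = (.T j, .T (-j - 1)) := by
    intro p hp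
    exact h1' p (by simpa using hp)
  have hev : IsEvenV u := by
    intro p hp
    obtain ⟨i, rfl⟩ := hsup p hp
    simp [par]
  have hdg : IsDegV 0 u := by
    intro p hp
    obtain ⟨i, rfl⟩ := hsup p hp
    simp only [qdeg]; push_cast; ring
  have zL : ∀ i q, u (.L i, q) = 0 := by
    intro i j
    by_contra h
    obtain ⟨n, hn⟩ := h1' _ h
    simp at hn
  have zL' : ∀ i q, u (q, .L i) = 0 := by
    intro i j
    by_contra h
    obtain ⟨n, hn⟩ := h1' _ h
    simp at hn
  have zG : ∀ i q, u (.G i, q) = 0 := by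
    intro i j
    by_contra h
    obtain ⟨n, hn⟩ := h1' _ h
    simp at hn
  have hd' := der_sub hd _ hev
  have hdeg' := deg_sub hdeg _ hdg
  have hT' : ∀ k, (d - inn u) (e (.T k)) = 0 := by
    intro k
    apply zero_T k
    · have := hd'.1 (.T k); rwa [add_zero] at this
    · have := hdeg' (.T k); rwa [zero_add] at this
    · intro i
      rw [LinearMap.sub_apply, Finsupp.sub_apply, inn_apply, hT,
        coef _ _ _ _ _ _ _ (preTL k i (.L 0)) (preTT k (k - i)), zL, zL]
      simp
    · intro i
      rw [LinearMap.sub_apply, Finsupp.sub_apply, inn_apply, hT,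
        coef _ _ _ _ _ _ _ (preTT k (k - i)) (preTL k i (.L 0)), zL, zL']
      simp
    · intro n
      rw [LinearMap.sub_apply, Finsupp.sub_apply, inn_apply, hT,
        coef _ _ _ _ _ _ _ (preTG k n) (preTG k (2 * k + 1 - n)), zG, zG]
      simp
  refine ⟨u, hev, hdg, hT', ?_⟩
  apply zero_G
  · have := hd'.1 (.G 0); rwa [add_zero] at this
  · have := hdeg' (.G 0); simpa [qdeg] using this
  · exact P_LG hd' hT'
  · intro i b; exact P_GL hd' hT' i b
  · intro j
    rw [LinearMap.sub_apply, Finsupp.sub_apply, inn_apply,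
      coef _ _ _ _ _ _ _ (preG0T j) (preG0G_odd (-j - 1)), zG, h1 j]
    simp [par, sgn_zero]
  · intro j
    rw [LinearMap.sub_apply, Finsupp.sub_apply, inn_apply, ← G0_sym hd hT,
      coef _ _ _ _ _ _ _ (preG0G_odd j) (preG0T (-j - 1)), zG, h1 j]
    simp

lemma step3 {d : Lsa →ₗ[ℂ] V} (hd : IsDerOfParity 0 d)
    (hT : ∀ k, d (e (.T k)) = 0) (hG : d (e (.G 0)) = 0) : d = 0 := by
  have hodd : ∀ k, d (e (.G (2 * k + 1))) = 0 := by
    intro k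
    have := der_TG hd hT k 0
    rwa [hG, map_zero, zero_add] at this
  have heven : ∀ k, d (e (.G (2 * k))) = 0 := by
    intro k
    have := der_TG hd hT (k - 1) (2 * 0 + 1)
    rwa [hodd, map_zero, show (2 * 0 + 1 + 2 * (k - 1) + 1 : ℤ) = 2 * k by ring] at this
  have hLz : ∀ m, d (e (.L m)) = 0 := by
    intro m
    have h := der_iff hd (.G 0) (.G (2 * m))
    have hb : bk (.G 0) (.G (2 * m)) = (2 : ℂ) • e (.L m) := by simp [bk]
    rw [hb, hG, heven, map_zero, map_zero, smul_zero, sub_zero, map_smul] at h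
    exact (smul_eq_zero.mp h).resolve_left (by norm_num)
  apply Finsupp.lhom_ext
  intro i c
  have : (Finsupp.single i c : Lsa) = c • e i := by simp [e]
  rw [this, map_smul, LinearMap.zero_apply]
  suffices h : d (e i) = 0 by rw [h, smul_zero]
  rcases i with a | a | a
  · exact hLz a
  · exact hT a
  · rcases Int.even_or_odd' a with ⟨k, rfl | rfl⟩
    · exact heven k
    · exact hodd k

/-- An even homogeneous super-derivation `d₀ : 𝓛 → V = 𝓛 ⊗ 𝓛` of degree `0`
is inner: there is `u ∈ V_0` with `d₀(x) = x ∗ u` for all `x ∈ 𝓛`. -/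
theorem even_degree_zero_der_is_inner (d : Lsa →ₗ[ℂ] V)
    (hd : IsDerOfParity 0 d) (hhom : IsDegHomogDer 0 d) :
    ∃ u : V, IsDegV 0 u ∧ ∀ x : Lsa, d x = act2 x u := by
  obtain ⟨u, hu1, hu2, hu3⟩ := step1 hd hhom
  have hd' := der_sub hd _ hu1
  have hdeg' := deg_sub hhom _ hu2
  obtain ⟨u', hv1, hv2, hv3, hv4⟩ := step2 hd' hdeg' hu3
  have hz := step3 (der_sub hd' _ hv1) hv3 hv4
  refine ⟨u + u', ?_, fun x => ?_⟩
  · intro p hp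
    by_cases h : p ∈ u.support
    · exact hu2 p h
    · apply hv2 p
      simp only [Finsupp.mem_support_iff, not_not, Finsupp.add_apply] at h hp ⊢
      simpa [h] using hp
  · have h := LinearMap.congr_fun hz x
    simp only [LinearMap.sub_apply, inn_apply, LinearMap.zero_apply] at h
    rw [act2_eq, map_add]
    rw [sub_sub, sub_eq_zero] at h
    exact h

end
end N2
end
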